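/- (Kernel Complex Lemma.) Let M i j (i, j ≥ 1) with horizontal maps h i j : M i j → M i (j+1) and vertical maps v i j : M i j → M (i+1) j form a commutative grid with exact rows and exact columns. Let K j = Ker(v 1 j) with maps κ j : K j → K (j+1) induced by h 1 j, and let L i = Ker(h i 1) with maps λ i : L i → L (i+1) induced by v i 1. Then for every n ≥ 1, the homology at position n of the kernel complex 0 → K₁ → K₂ → K₃ → ⋯ is isomorphic as an R-module to the homology at position n of the kernel complex 0 → L₁ → L₂ → L₃ → ⋯. (Here homology at position 1 means Ker κ₁, resp. Ker λ₁; homology at position n ≥ 2 means Ker κₙ / Im κₙ₋₁, resp. Ker λₙ / Im λₙ₋₁.) -/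

import Mathlib

/-- Two subquotients reached from a common module by two maps are isomorphic. -/
theorem kcl_aux {R : Type*} [Ring R] {A B C : Type*} [AddCommGroup A] [AddCommGroup B]
    [AddCommGroup C] [Module R A] [Module R B] [Module R C]
    (f : A →ₗ[R] B) (g : A →ₗ[R] C) (S P : Submodule R B) (T Q : Submodule R C)
    (hST : ∀ a, f a ∈ S ↔ g a ∈ T) (hS : ∀ b ∈ S, ∃ a, f a = b) (hT : ∀ c ∈ T, ∃ a, g a = c)
    (hPQ : ∀ a, f a ∈ S → (f a ∈ P ↔ g a ∈ Q)) :
    Nonempty ((↥S ⧸ P.comap S.subtype) ≃ₗ[R] (↥T ⧸ Q.comap T.subtype)) := by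
  let f' : ↥(S.comap f) →ₗ[R] ↥S := f.restrict (fun a ha => ha)
  let g' : ↥(S.comap f) →ₗ[R] ↥T := g.restrict (fun a ha => (hST a).1 ha)
  let F := (P.comap S.subtype).mkQ ∘ₗ f'
  let G := (Q.comap T.subtype).mkQ ∘ₗ g'
  have hF : Function.Surjective F := by
    apply (Submodule.mkQ_surjective _).comp
    rintro ⟨b, hb⟩
    obtain ⟨a, rfl⟩ := hS b hb
    exact ⟨⟨a, hb⟩, rfl⟩
  have hG : Function.Surjective G := by
    apply (Submodule.mkQ_surjective _).comp
    rintro ⟨b, hb⟩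
    obtain ⟨a, rfl⟩ := hT b hb
    exact ⟨⟨a, (hST a).2 hb⟩, rfl⟩
  have hk : LinearMap.ker F = LinearMap.ker G := by
    ext ⟨a, ha⟩
    have h1 : (⟨a, ha⟩ : ↥(S.comap f)) ∈ LinearMap.ker F ↔ f a ∈ P := by
      simp only [F, LinearMap.mem_ker, LinearMap.comp_apply, Submodule.mkQ_apply,
        Submodule.Quotient.mk_eq_zero]
      rfl
    have h2 : (⟨a, ha⟩ : ↥(S.comap f)) ∈ LinearMap.ker G ↔ g a ∈ Q := by
      simp only [G, LinearMap.mem_ker, LinearMap.comp_apply, Submodule.mkQ_apply,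
        Submodule.Quotient.mk_eq_zero]
      rfl
    rw [h1, h2]
    exact hPQ a ha
  exact ⟨(F.quotKerEquivOfSurjective hF).symm.trans
    ((Submodule.quotEquivOfEq _ _ hk).trans (G.quotKerEquivOfSurjective hG))⟩

section
open LinearMap

/-- The zigzag along an antidiagonal of the grid. -/
theorem kcl_zigzag {R : Type*} [Ring R]
    (M : ℕ → ℕ → Type*) [∀ i j, AddCommGroup (M i j)] [∀ i j, Module R (M i j)]
    (h : ∀ i j, M i j →ₗ[R] M i (j + 1))
    (v : ∀ i j, M i j →ₗ[R] M (i + 1) j)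
    (hcomm : ∀ i j (a : M i j), v i (j + 1) (h i j a) = h (i + 1) j (v i j a))
    (hrow : ∀ i j, range (h i j) = ker (h i (j + 1)))
    (hcol : ∀ i j, range (v i j) = ker (v (i + 1) j)) (j : ℕ) :
    ∀ i k, k = i + j → Nonempty (
      (↥(ker (h i (j + 1)) ⊓ ker (v i (j + 1))) ⧸
        ((ker (v i j)).map (h i j)).comap (ker (h i (j + 1)) ⊓ ker (v i (j + 1))).subtype)
      ≃ₗ[R]
      (↥(ker (h (k + 1) 0) ⊓ ker (v (k + 1) 0)) ⧸
        ((ker (h k 0)).map (v k 0)).comap (ker (h (k + 1) 0) ⊓ ker (v (k + 1) 0)).subtype)) := by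
  have hh : ∀ i j (a : M i j), h i (j + 1) (h i j a) = 0 := fun i j a => by
    have : h i j a ∈ ker (h i (j + 1)) := hrow i j ▸ mem_range_self _ a
    exact this
  have vv : ∀ i j (a : M i j), v (i + 1) j (v i j a) = 0 := fun i j a => by
    have : v i j a ∈ ker (v (i + 1) j) := hcol i j ▸ mem_range_self _ a
    exact this
  have step : ∀ i j, Nonempty (
      (↥(ker (h i (j + 1)) ⊓ ker (v i (j + 1))) ⧸
        ((ker (v i j)).map (h i j)).comap (ker (h i (j + 1)) ⊓ ker (v i (j + 1))).subtype)
      ≃ₗ[R]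
      (↥(ker (h (i + 1) j) ⊓ ker (v (i + 1) j)) ⧸
        ((ker (h i j)).map (v i j)).comap (ker (h (i + 1) j) ⊓ ker (v (i + 1) j)).subtype)) := by
    intro i j
    apply kcl_aux (h i j) (v i j)
    · intro a
      simp [hh, vv, hcomm]
    · rintro b ⟨hb, -⟩
      have : b ∈ range (h i j) := by rw [hrow]; exact hb
      exact this
    · rintro b ⟨-, hb⟩
      have : b ∈ range (v i j) := by rw [hcol]; exact hb
      exact this
    · intro a _
      constructor
      · rintro ⟨c, hc, hca⟩
        have hc' : v i j c = 0 := hc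
        exact ⟨a - c, by simp [hca], by simp [hc']⟩
      · rintro ⟨c, hc, hca⟩
        have hc' : h i j c = 0 := hc
        exact ⟨a - c, by simp [hca], by simp [hc']⟩
  induction j with
  | zero =>
    rintro i k rfl
    exact step _ 0
  | succ j ih =>
    intro i k hk
    obtain ⟨e1⟩ := step i (j + 1)
    obtain ⟨e2⟩ := ih (i + 1) k (by omega)
    have heq : (ker (h i (j + 1))).map (v i (j + 1)) = (ker (v (i + 1) j)).map (h (i + 1) j) := by
      rw [← hrow, ← hcol, ← range_comp, ← range_comp]
      congr 1
      ext a
      exact hcomm i j a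
    exact ⟨e1.trans ((Submodule.quotEquivOfEq _ _ (by rw [heq])).trans e2)⟩

end

/-- The Kernel Complex Lemma.  Given a commutative grid of `R`-modules
`M i j` (indexed from `0`, corresponding to the indices `≥ 1` of the paper)
with horizontal maps `h i j : M i j → M i (j+1)` and vertical maps
`v i j : M i j → M (i+1) j`, commuting squares, exact rows and exact columns,
let `κ j : Ker (v 0 j) → Ker (v 0 (j+1))` be induced by `h 0 j` and
`lam i : Ker (h i 0) → Ker (h (i+1) 0)` be induced by `v i 0`.
Then the two kernel complexes `0 → Ker (v 0 0) → Ker (v 0 1) → ⋯` and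
`0 → Ker (h 0 0) → Ker (h 1 0) → ⋯` have isomorphic homology in each
position: at the first position the homology is `Ker (κ 0)`
(resp. `Ker (lam 0)`), and at position `n + 2` it is
`Ker (κ (n+1)) / Im (κ n)` (resp. `Ker (lam (n+1)) / Im (lam n)`). -/
theorem kernel_complex_lemma {R : Type*} [Ring R]
    (M : ℕ → ℕ → Type*) [∀ i j, AddCommGroup (M i j)] [∀ i j, Module R (M i j)]
    (h : ∀ i j, M i j →ₗ[R] M i (j + 1))
    (v : ∀ i j, M i j →ₗ[R] M (i + 1) j)
    (hcomm : ∀ i j, (v i (j + 1)) ∘ₗ (h i j) = (h (i + 1) j) ∘ₗ (v i j))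
    (hrow : ∀ i j, LinearMap.range (h i j) = LinearMap.ker (h i (j + 1)))
    (hcol : ∀ i j, LinearMap.range (v i j) = LinearMap.ker (v (i + 1) j))
    (κ : ∀ j, ↥(LinearMap.ker (v 0 j)) →ₗ[R] ↥(LinearMap.ker (v 0 (j + 1))))
    (hκ : ∀ j (x : ↥(LinearMap.ker (v 0 j))), ((κ j x : M 0 (j + 1))) = h 0 j (x : M 0 j))
    (lam : ∀ i, ↥(LinearMap.ker (h i 0)) →ₗ[R] ↥(LinearMap.ker (h (i + 1) 0)))
    (hlam : ∀ i (x : ↥(LinearMap.ker (h i 0))), ((lam i x : M (i + 1) 0)) = v i 0 (x : M i 0)) :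
    Nonempty (↥(LinearMap.ker (κ 0)) ≃ₗ[R] ↥(LinearMap.ker (lam 0))) ∧
    ∀ n : ℕ, Nonempty (
      (↥(LinearMap.ker (κ (n + 1))) ⧸
        (LinearMap.range (κ n)).comap (LinearMap.ker (κ (n + 1))).subtype)
      ≃ₗ[R]
      (↥(LinearMap.ker (lam (n + 1))) ⧸
        (LinearMap.range (lam n)).comap (LinearMap.ker (lam (n + 1))).subtype)) := by
  constructor
  · have hk0 : ∀ x : ↥(LinearMap.ker (v 0 0)), x ∈ LinearMap.ker (κ 0) ↔ h 0 0 x = 0 := by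
      intro x
      rw [LinearMap.mem_ker, ← hκ, ZeroMemClass.coe_eq_zero]
    have hl0 : ∀ x : ↥(LinearMap.ker (h 0 0)), x ∈ LinearMap.ker (lam 0) ↔ v 0 0 x = 0 := by
      intro x
      rw [LinearMap.mem_ker, ← hlam, ZeroMemClass.coe_eq_zero]
    exact ⟨{
      toFun := fun x => ⟨⟨x.1.1, (hk0 x.1).1 x.2⟩, (hl0 _).2 x.1.2⟩
      invFun := fun x => ⟨⟨x.1.1, (hl0 x.1).1 x.2⟩, (hk0 _).2 x.1.2⟩
      map_add' := fun _ _ => rfl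
      map_smul' := fun _ _ => rfl
      left_inv := fun _ => rfl
      right_inv := fun _ => rfl }⟩
  · intro n
    obtain ⟨e⟩ := kcl_zigzag M h v (fun i j a => LinearMap.congr_fun (hcomm i j) a) hrow hcol
      n 0 n (by omega)
    have hk0 : ∀ x, x ∈ LinearMap.ker (κ (n + 1)) ↔ h 0 (n + 1) x = 0 := by
      intro x
      rw [LinearMap.mem_ker, ← hκ, ZeroMemClass.coe_eq_zero]
    have hl0 : ∀ x, x ∈ LinearMap.ker (lam (n + 1)) ↔ v (n + 1) 0 x = 0 := by
      intro x
      rw [LinearMap.mem_ker, ← hlam, ZeroMemClass.coe_eq_zero]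
    obtain ⟨e1⟩ := kcl_aux LinearMap.id (LinearMap.ker (v 0 (n + 1))).subtype
      (LinearMap.ker (κ (n + 1))) (LinearMap.range (κ n))
      (LinearMap.ker (h 0 (n + 1)) ⊓ LinearMap.ker (v 0 (n + 1)))
      ((LinearMap.ker (v 0 n)).map (h 0 n))
      (fun a => (hk0 a).trans ⟨fun ha => ⟨ha, a.2⟩, fun ha => ha.1⟩)
      (fun b _ => ⟨b, rfl⟩) (fun c hc => ⟨⟨c, hc.2⟩, rfl⟩)
      (fun a _ => ⟨fun ⟨c, hc⟩ => ⟨c.1, c.2, by rw [← hκ, hc]; rfl⟩,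
        fun ⟨c, hc, hca⟩ => ⟨⟨c, hc⟩, Subtype.ext ((hκ n ⟨c, hc⟩).trans hca)⟩⟩)
    obtain ⟨e2⟩ := kcl_aux LinearMap.id (LinearMap.ker (h (n + 1) 0)).subtype
      (LinearMap.ker (lam (n + 1))) (LinearMap.range (lam n))
      (LinearMap.ker (h (n + 1) 0) ⊓ LinearMap.ker (v (n + 1) 0))
      ((LinearMap.ker (h n 0)).map (v n 0))
      (fun a => (hl0 a).trans ⟨fun ha => ⟨a.2, ha⟩, fun ha => ha.2⟩)
      (fun b _ => ⟨b, rfl⟩) (fun c hc => ⟨⟨c, hc.1⟩, rfl⟩)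
      (fun a _ => ⟨fun ⟨c, hc⟩ => ⟨c.1, c.2, by rw [← hlam, hc]; rfl⟩,
        fun ⟨c, hc, hca⟩ => ⟨⟨c, hc⟩, Subtype.ext ((hlam n ⟨c, hc⟩).trans hca)⟩⟩)
    exact ⟨e1.trans (e.trans e2.symm)⟩
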